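/- arXiv:2204.11027 — 3 statements merged into one kernel-verified Lean document; each statement's English description precedes it below -/
import Mathlib

section
/- Let g be a finite-dimensional simple Lie algebra over ℂ and let L(g) = ℂ[t,t⁻¹] ⊗ g be its loop algebra. A ℂ-subspace J of L(g) is a Lie ideal of L(g) if and only if there exists an ideal I of the Laurent polynomial ring ℂ[t,t⁻¹] such that J = I ⊗ g (the ℂ-span of all elements p ⊗ x with p ∈ I and x ∈ g). Equivalently, since ℂ[t,t⁻¹] is a principal ideal domain, every Lie ideal of L(g) is of the form f·ℂ[t,t⁻¹] ⊗ g for some f ∈ ℂ[t,t⁻¹]. -/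
open scoped TensorProduct

/-- The base ring `ℂ` acts as a Lie algebra of scalars on the loop algebra
`ℂ[t,t⁻¹] ⊗[ℂ] g` (and more generally on `B ⊗[ℂ] g` for any commutative `ℂ`-algebra `B`). -/
noncomputable instance loopLieAlgebra (B : Type*) [CommRing B] [Algebra ℂ B]
    (g : Type*) [LieRing g] [LieAlgebra ℂ g] : LieAlgebra ℂ (B ⊗[ℂ] g) where
  lie_smul c x y := by
    rw [← algebraMap_smul B c y, lie_smul, algebraMap_smul]

/-!
Let `A ⊆ End g` be the associative algebra generated by the operators `ad x`. Bracketing with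
`1 ⊗ x` is `id ⊗ ad x`, so a Lie ideal `J` of `B ⊗ g` is stable under `id ⊗ a` for every `a ∈ A`.
As `g` is a simple `A`-module whose endomorphisms are scalars, Jacobson density makes `A` agree with
`End g` on finite sets, so `J` is stable under `id ⊗ f` for all `f ∈ End g`. The rank-one operators
`x ↦ bᵢ*(x) y` then extract the coefficients of an element of `J` in a basis `b` of `g`, which gives
`J = V ⊗ g` with `V = {p | p ⊗ g ⊆ J}`. Finally `⁅q ⊗ x, p ⊗ y⁆ = qp ⊗ ⁅x, y⁆` and `⁅g, g⁆ = g` show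
that `V` is an ideal of `B`.
-/

section TensorSubmodule

variable {R B M : Type*} [CommRing R] [AddCommGroup B] [Module R B] [AddCommGroup M] [Module R M]

variable (M) in
/-- The submodule `V ⊗ M` of `B ⊗ M`: the span of the pure tensors `p ⊗ x` with `p ∈ V`. -/
def tensorSubmodule (V : Submodule R B) : Submodule R (B ⊗[R] M) :=
  Submodule.span R {w | ∃ p ∈ V, ∃ x : M, w = p ⊗ₜ[R] x}

/-- The coefficients of `N ⊆ B ⊗ M`, that is `{p | p ⊗ M ⊆ N}`: the largest `V` with
`V ⊗ M ⊆ N`. -/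
def coeffSubmodule (N : Submodule R (B ⊗[R] M)) : Submodule R B :=
  ⨅ x : M, N.comap ((TensorProduct.mk R B M).flip x)

theorem mem_coeffSubmodule {N : Submodule R (B ⊗[R] M)} {p : B} :
    p ∈ coeffSubmodule N ↔ ∀ x : M, p ⊗ₜ[R] x ∈ N := by
  simp only [coeffSubmodule, Submodule.mem_iInf, Submodule.mem_comap, LinearMap.flip_apply,
    TensorProduct.mk_apply]

theorem tensorSubmodule_coeffSubmodule_le (N : Submodule R (B ⊗[R] M)) :
    tensorSubmodule M (coeffSubmodule N) ≤ N := by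
  refine Submodule.span_le.mpr ?_
  rintro _ ⟨p, hp, x, rfl⟩
  exact mem_coeffSubmodule.mp hp x

theorem lTensor_smulRight_coord_sum_tmul {ι : Type*} (b : Module.Basis ι R M) (c : ι →₀ B) (i : ι)
    (x : M) :
    ((b.coord i).smulRight x).lTensor B (c.sum fun k p ↦ p ⊗ₜ[R] b k) = c i ⊗ₜ[R] x := by
  classical
  simp only [Finsupp.sum, map_sum, LinearMap.lTensor_tmul, LinearMap.smulRight_apply,
    Module.Basis.coord_apply, Module.Basis.repr_self, Finsupp.single_apply]
  simp +contextual [TensorProduct.tmul_ite]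

theorem eq_tensorSubmodule_of_forall_lTensor_mem [Module.Free R M] {N : Submodule R (B ⊗[R] M)}
    (hN : ∀ f : Module.End R M, ∀ j ∈ N, f.lTensor B j ∈ N) :
    N = tensorSubmodule M (coeffSubmodule N) := by
  classical
  refine le_antisymm (fun j hj ↦ ?_) (tensorSubmodule_coeffSubmodule_le N)
  let b := Module.Free.chooseBasis R M
  obtain ⟨c, rfl⟩ := (TensorProduct.equivFinsuppOfBasisRight (M := B) b).symm.surjective j
  rw [TensorProduct.equivFinsuppOfBasisRight_symm_apply] at hj ⊢
  have coeff_mem (i) : c i ∈ coeffSubmodule N := mem_coeffSubmodule.mpr fun x ↦ by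
    simpa only [lTensor_smulRight_coord_sum_tmul] using hN ((b.coord i).smulRight x) _ hj
  exact Submodule.sum_mem _ fun i _ ↦ Submodule.subset_span ⟨c i, coeff_mem i, b i, rfl⟩

theorem lTensor_mem_of_mem_adjoin {S : Set (Module.End R M)} {N : Submodule R (B ⊗[R] M)}
    (hS : ∀ f ∈ S, ∀ j ∈ N, f.lTensor B j ∈ N) {a : Module.End R M}
    (ha : a ∈ Algebra.adjoin R S) : ∀ j ∈ N, a.lTensor B j ∈ N := by
  induction ha using Algebra.adjoin_induction with
  | mem f hf => exact hS f hf
  | algebraMap c =>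
    intro j hj
    rw [Module.algebraMap_end_eq_smul_id, LinearMap.lTensor_smul, LinearMap.lTensor_id]
    exact N.smul_mem c hj
  | add f g _ _ hf hg =>
    intro j hj
    rw [LinearMap.lTensor_add]
    exact N.add_mem (hf j hj) (hg j hj)
  | mul f g _ _ hf hg =>
    intro j hj
    rw [LinearMap.lTensor_mul]
    exact hf _ (hg j hj)

theorem lTensor_mem_of_forall_exists_eqOn {S : Set (Module.End R M)} {N : Submodule R (B ⊗[R] M)}
    (hS : ∀ a ∈ S, ∀ j ∈ N, a.lTensor B j ∈ N) {f : Module.End R M}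
    (hf : ∀ s : Finset M, ∃ a ∈ S, Set.EqOn f a s) : ∀ j ∈ N, f.lTensor B j ∈ N := by
  classical
  intro j hj
  obtain ⟨T, hT⟩ := TensorProduct.exists_finset j
  obtain ⟨a, haS, ha⟩ := hf (T.image Prod.snd)
  have lTensor_eq : f.lTensor B j = a.lTensor B j := by
    simp only [hT, map_sum, LinearMap.lTensor_tmul]
    exact Finset.sum_congr rfl fun t ht ↦ by rw [ha (Finset.mem_image_of_mem Prod.snd ht)]
  exact lTensor_eq ▸ hS a haS j hj

end TensorSubmodule

/-- A Lie module is central if its only endomorphisms are the scalars. For the adjoint module of a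
Lie algebra this says that its centroid is `R`. -/
def IsCentralLieModule (R L M : Type*) [CommRing R] [LieRing L] [AddCommGroup M] [Module R M]
    [LieRingModule L M] : Prop :=
  ∀ φ : M →ₗ⁅R,L⁆ M, ∃ c : R, ∀ m, φ m = c • m

theorem isCentralLieModule_of_isAlgClosed {K L M : Type*} [Field K] [IsAlgClosed K] [LieRing L]
    [LieAlgebra K L] [AddCommGroup M] [Module K M] [LieRingModule L M] [LieModule K L M]
    [FiniteDimensional K M] [LieModule.IsIrreducible K L M] : IsCentralLieModule K L M := by
  intro φ
  have : Nontrivial M := LieModule.nontrivial_of_isIrreducible K L M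
  obtain ⟨c, hc⟩ := Module.End.exists_eigenvalue (φ : Module.End K M)
  obtain ⟨v, hv, hv0⟩ := hc.exists_hasEigenvector
  have mem_ker (m : M) : m ∈ (φ - c • LieModuleHom.id).ker ↔ φ m = c • m := by
    simp [sub_eq_zero]
  have ker_eq_top : (φ - c • LieModuleHom.id).ker = ⊤ := by
    refine (eq_bot_or_eq_top _).resolve_left fun h ↦ hv0 ?_
    rw [← LieSubmodule.mem_bot (R := K) (L := L), ← h, mem_ker]
    exact Module.End.mem_eigenspace_iff.mp hv
  exact ⟨c, fun m ↦ (mem_ker m).mp (ker_eq_top ▸ LieSubmodule.mem_top m)⟩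

section Density

variable (R L M : Type*) [CommRing R] [LieRing L] [LieAlgebra R L]
  [AddCommGroup M] [Module R M] [LieRingModule L M] [LieModule R L M]

/-- The associative algebra of endomorphisms of `M` generated by the action of `L`: the
ring over which irreducibility of `M` becomes simplicity, so that density applies. -/
def actionAlgebra : Subalgebra R (Module.End R M) :=
  Algebra.adjoin R (Set.range (LieModule.toEnd R L M))

variable {R L M} in
theorem toEnd_mem_actionAlgebra (x : L) : LieModule.toEnd R L M x ∈ actionAlgebra R L M :=
  Algebra.subset_adjoin ⟨x, rfl⟩

instance isSimpleModule_actionAlgebra [LieModule.IsIrreducible R L M] :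
    IsSimpleModule (actionAlgebra R L M) M := by
  have : Nontrivial M := LieModule.nontrivial_of_isIrreducible R L M
  refine (isSimpleModule_iff _ _).mpr ⟨fun N ↦ ?_⟩
  let N' : LieSubmodule R L M :=
    { N.restrictScalars R with
      lie_mem := fun {x m} hm ↦ N.smul_mem ⟨_, toEnd_mem_actionAlgebra x⟩ hm }
  have mem_iff (m : M) : m ∈ N' ↔ m ∈ N := Iff.rfl
  refine (eq_bot_or_eq_top N').imp (fun h ↦ ?_) (fun h ↦ ?_) <;> ext m <;> simp [← mem_iff, h]

variable {R L M}

theorem IsCentralLieModule.exists_forall_eq_smul (h : IsCentralLieModule R L M)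
    (φ : Module.End (actionAlgebra R L M) M) : ∃ c : R, ∀ m, φ m = c • m :=
  h { φ.restrictScalars R with
      map_lie' := fun {x m} ↦ φ.map_smul ⟨_, toEnd_mem_actionAlgebra x⟩ m }

theorem IsCentralLieModule.exists_mem_actionAlgebra_eqOn [LieModule.IsIrreducible R L M]
    (h : IsCentralLieModule R L M) (f : Module.End R M) (s : Finset M) :
    ∃ a ∈ actionAlgebra R L M, Set.EqOn f a s := by
  let F : Module.End (Module.End (actionAlgebra R L M) M) M :=
    { f with
      map_smul' := fun φ m ↦ by
        obtain ⟨c, hc⟩ := h.exists_forall_eq_smul φ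
        simp [hc] }
  obtain ⟨a, ha⟩ := jacobson_density F s
  exact ⟨a, a.2, ha⟩

end Density

section ExtendScalars

variable {R B L M : Type*} [CommRing R] [CommRing B] [Algebra R B] [LieRing L] [LieAlgebra R L]
  [AddCommGroup M] [Module R M] [LieRingModule L M] [LieModule R L M]

-- The left side elaborates to a bare `Bracket` instance, in which `add_lie` and `lie_add` find
-- nothing to rewrite; the linear maps on the right make its bilinearity available.
theorem lie_eq_toEnd_apply (z : B ⊗[R] L) (j : B ⊗[R] M) :
    ⁅z, j⁆ = LieModule.toEnd B (B ⊗[R] L) (B ⊗[R] M) z j :=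
  rfl

theorem lTensor_toEnd_apply (x : L) (j : B ⊗[R] M) :
    (LieModule.toEnd R L M x).lTensor B j = ⁅(1 : B) ⊗ₜ[R] x, j⁆ := by
  rw [lie_eq_toEnd_apply, LieModule.toEnd_baseChange, LinearMap.baseChange_eq_ltensor]

theorem lie_mem_tensorSubmodule (I : Ideal B) (z : B ⊗[R] L) {j : B ⊗[R] M}
    (hj : j ∈ tensorSubmodule M (I.restrictScalars R)) :
    ⁅z, j⁆ ∈ tensorSubmodule M (I.restrictScalars R) := by
  rw [lie_eq_toEnd_apply]
  induction z using TensorProduct.induction_on with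
  | zero => rw [map_zero]; exact Submodule.zero_mem _
  | add y z hy hz => rw [map_add]; exact Submodule.add_mem _ hy hz
  | tmul q y =>
    let qy := (LieModule.toEnd B (B ⊗[R] L) (B ⊗[R] M) (q ⊗ₜ[R] y)).restrictScalars R
    refine (Submodule.map_span_le qy _ _).mpr ?_ (Submodule.mem_map_of_mem hj)
    rintro _ ⟨p, hp, x, rfl⟩
    exact Submodule.subset_span ⟨q * p, I.mul_mem_left q hp, ⁅y, x⁆, rfl⟩

theorem eq_tensorSubmodule_of_forall_one_tmul_lie_mem [Module.Free R M]
    [LieModule.IsIrreducible R L M] (hM : IsCentralLieModule R L M) {N : Submodule R (B ⊗[R] M)}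
    (hN : ∀ x : L, ∀ j ∈ N, ⁅(1 : B) ⊗ₜ[R] x, j⁆ ∈ N) :
    N = tensorSubmodule M (coeffSubmodule N) := by
  have toEnd_stable : ∀ f ∈ Set.range (LieModule.toEnd R L M), ∀ j ∈ N, f.lTensor B j ∈ N := by
    rintro _ ⟨x, rfl⟩ j hj
    exact lTensor_toEnd_apply (R := R) x j ▸ hN x j hj
  have action_stable : ∀ a ∈ actionAlgebra R L M, ∀ j ∈ N, a.lTensor B j ∈ N :=
    fun _ ↦ lTensor_mem_of_mem_adjoin toEnd_stable
  exact eq_tensorSubmodule_of_forall_lTensor_mem fun f ↦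
    lTensor_mem_of_forall_exists_eqOn action_stable (hM.exists_mem_actionAlgebra_eqOn f)

end ExtendScalars

theorem lie_top_top_eq_top_of_isSimple (R L : Type*) [CommRing R] [LieRing L] [LieAlgebra R L]
    [LieAlgebra.IsSimple R L] : ⁅(⊤ : LieIdeal R L), (⊤ : LieIdeal R L)⁆ = ⊤ := by
  refine (LieAlgebra.IsSimple.eq_bot_or_eq_top _).resolve_left fun h ↦ ?_
  refine LieAlgebra.IsSimple.non_abelian R (L := L) ⟨fun x y ↦ ?_⟩
  rw [← LieSubmodule.mem_bot (R := R) (L := L), ← h]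
  exact LieSubmodule.lie_mem_lie (LieSubmodule.mem_top x) (LieSubmodule.mem_top y)

theorem mul_mem_coeffSubmodule {R B L : Type*} [CommRing R] [CommRing B] [Algebra R B] [LieRing L]
    [LieAlgebra R L] (hL : ⁅(⊤ : LieIdeal R L), (⊤ : LieIdeal R L)⁆ = ⊤)
    {J : Submodule R (B ⊗[R] L)} (hJ : ∀ z : B ⊗[R] L, ∀ j ∈ J, ⁅z, j⁆ ∈ J) (q : B) {p : B}
    (hp : p ∈ coeffSubmodule J) : q * p ∈ coeffSubmodule J := by
  rw [mem_coeffSubmodule] at hp ⊢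
  intro x
  have hx : x ∈ ⁅(⊤ : LieIdeal R L), (⊤ : LieIdeal R L)⁆ := hL.symm ▸ LieSubmodule.mem_top x
  rw [← LieSubmodule.mem_toSubmodule, LieSubmodule.lieIdeal_oper_eq_linear_span'] at hx
  induction hx using Submodule.span_induction with
  | mem _ hw =>
    obtain ⟨u, -, v, -, rfl⟩ := hw
    exact hJ (q ⊗ₜ[R] u) _ (hp v)
  | zero => rw [TensorProduct.tmul_zero]; exact J.zero_mem
  | add u v _ _ hu hv => rw [TensorProduct.tmul_add]; exact J.add_mem hu hv
  | smul c u _ hu => rw [TensorProduct.tmul_smul]; exact J.smul_mem c hu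

theorem exists_ideal_eq_tensorSubmodule {K B L : Type*} [Field K] [CommRing B] [Algebra K B]
    [LieRing L] [LieAlgebra K L] [LieAlgebra.IsSimple K L] (hL : IsCentralLieModule K L L)
    {J : Submodule K (B ⊗[K] L)} (hJ : ∀ z : B ⊗[K] L, ∀ j ∈ J, ⁅z, j⁆ ∈ J) :
    ∃ I : Ideal B, J = tensorSubmodule L (I.restrictScalars K) := by
  let I : Ideal B :=
    { coeffSubmodule J with
      smul_mem' := fun q _ hp ↦
        mul_mem_coeffSubmodule (lie_top_top_eq_top_of_isSimple K L) hJ q hp }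
  exact ⟨I, eq_tensorSubmodule_of_forall_one_tmul_lie_mem hL fun x ↦ hJ (1 ⊗ₜ x)⟩

theorem isPrincipalIdealRing_of_isLocalization {R : Type*} (S : Type*) [CommRing R] [CommRing S]
    [Algebra R S] (m : Submonoid R) [IsLocalization m S] [IsPrincipalIdealRing R] :
    IsPrincipalIdealRing S where
  principal I := by
    rw [← IsLocalization.map_under m S I]
    exact (IsPrincipalIdealRing.principal _).map_ringHom (algebraMap R S)

instance isPrincipalIdealRing_laurentPolynomial (K : Type*) [Field K] :
    IsPrincipalIdealRing (LaurentPolynomial K) :=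
  isPrincipalIdealRing_of_isLocalization _ (Submonoid.powers (Polynomial.X : Polynomial K))

theorem loopAlgebra_isIdeal_iff_general {K B g : Type*} [Field K] [CommRing B] [Algebra K B]
    [LieRing g] [LieAlgebra K g] [LieAlgebra.IsSimple K g] (hg : IsCentralLieModule K g g)
    (J : Submodule K (B ⊗[K] g)) :
    ((∀ z : B ⊗[K] g, ∀ j ∈ J, ⁅z, j⁆ ∈ J) ↔
      ∃ I : Ideal B, J = tensorSubmodule g (I.restrictScalars K)) ∧
    (IsPrincipalIdealRing B →
      ((∀ z : B ⊗[K] g, ∀ j ∈ J, ⁅z, j⁆ ∈ J) ↔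
        ∃ f : B, J = tensorSubmodule g ((Ideal.span {f}).restrictScalars K))) := by
  have lie_mem_iff : (∀ z : B ⊗[K] g, ∀ j ∈ J, ⁅z, j⁆ ∈ J) ↔
      ∃ I : Ideal B, J = tensorSubmodule g (I.restrictScalars K) := by
    refine ⟨exists_ideal_eq_tensorSubmodule hg, ?_⟩
    rintro ⟨I, rfl⟩ z j hj
    exact lie_mem_tensorSubmodule I z hj
  refine ⟨lie_mem_iff, fun _ ↦ lie_mem_iff.trans ⟨?_, fun ⟨f, hf⟩ ↦ ⟨_, hf⟩⟩⟩
  rintro ⟨I, hI⟩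
  obtain ⟨f, rfl⟩ := IsPrincipalIdealRing.principal I
  exact ⟨f, hI⟩

/-- A `ℂ`-subspace `J` of the loop algebra `L(g) = ℂ[t,t⁻¹] ⊗ g` of a finite-dimensional
simple complex Lie algebra `g` is a Lie ideal if and only if `J = I ⊗ g` for some ideal
`I` of `ℂ[t,t⁻¹]`; equivalently (as `ℂ[t,t⁻¹]` is a PID), if and only if
`J = f·ℂ[t,t⁻¹] ⊗ g` for some Laurent polynomial `f`. -/
theorem loopAlgebra_isIdeal_iff (g : Type*) [LieRing g] [LieAlgebra ℂ g]
    [FiniteDimensional ℂ g] [LieAlgebra.IsSimple ℂ g]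
    (J : Submodule ℂ (LaurentPolynomial ℂ ⊗[ℂ] g)) :
    ((∀ z : LaurentPolynomial ℂ ⊗[ℂ] g, ∀ j ∈ J, ⁅z, j⁆ ∈ J) ↔
      ∃ I : Ideal (LaurentPolynomial ℂ),
        J = Submodule.span ℂ {w : LaurentPolynomial ℂ ⊗[ℂ] g |
              ∃ p ∈ I, ∃ x : g, w = p ⊗ₜ[ℂ] x}) ∧
    ((∀ z : LaurentPolynomial ℂ ⊗[ℂ] g, ∀ j ∈ J, ⁅z, j⁆ ∈ J) ↔
      ∃ f : LaurentPolynomial ℂ,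
        J = Submodule.span ℂ {w : LaurentPolynomial ℂ ⊗[ℂ] g |
              ∃ p ∈ Ideal.span {f}, ∃ x : g, w = p ⊗ₜ[ℂ] x}) := by
  have h := loopAlgebra_isIdeal_iff_general isCentralLieModule_of_isAlgClosed J
  exact ⟨h.1, h.2 inferInstance⟩
end

section
/- Let g be a finite-dimensional simple Lie algebra over ℂ and let L(g) = ℂ[t,t⁻¹] ⊗ g be its loop algebra. Every nonzero Lie ideal J of L(g) has finite codimension; that is, the quotient Lie algebra L(g)/J is finite-dimensional over ℂ. -/
open scoped TensorProduct

/-!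
Let `M` be a nontrivial finite-dimensional irreducible `L`-module over an algebraically closed
field, and let `N` be a nonzero submodule of `B ⊗ M` over `B ⊗ L`. By Burnside's theorem the
operators `m ↦ ⁅x, m⁆` generate `End M`, so `N` is stable under `id ⊗ f` for every `f`;
rank-one `f` turn a nonzero element of `N` into some `b ≠ 0` with `b ⊗ M ⊆ N`. As `M` is spanned
by brackets `⁅x, m⁆` and `⁅c ⊗ x, b ⊗ m⁆ = c b ⊗ ⁅x, m⁆`, these `b` form an ideal `I` of `B`.
Hence `(B ⊗ M) / N` is a quotient of `(B / I) ⊗ M`, and for Laurent polynomials `B / I` is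
finite-dimensional because `t` and `t⁻¹` are algebraic modulo `I ≠ 0`. The loop algebra is the
case of the adjoint module.
-/

section LaurentPolynomial

open scoped LaurentPolynomial
open LaurentPolynomial

variable {K A : Type*} [Field K] [CommRing A] [Algebra K A]

theorem isIntegral_map_T_one_of_not_injective (φ : K[T;T⁻¹] →ₐ[K] A)
    (hφ : ¬ Function.Injective φ) : IsIntegral K (φ (T 1)) := by
  obtain ⟨p, hp, hp0⟩ : ∃ p, φ p = 0 ∧ p ≠ 0 := by
    simpa [injective_iff_map_eq_zero] using hφ
  obtain ⟨n, f, hf⟩ := exists_T_pow p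
  have aeval_T : Polynomial.aeval (T 1 : K[T;T⁻¹]) = Polynomial.toLaurentAlg := by ext; simp
  refine IsAlgebraic.isIntegral ⟨f, ?_, ?_⟩
  · rintro rfl
    exact hp0 ((isUnit_T n).mul_left_eq_zero.mp (by simpa using hf.symm))
  · rw [Polynomial.aeval_algHom_apply, aeval_T, Polynomial.toLaurentAlg_apply, hf, map_mul, hp,
      zero_mul]

theorem isIntegral_map_of_not_injective (φ : K[T;T⁻¹] →ₐ[K] A)
    (hφ : ¬ Function.Injective φ) (q : K[T;T⁻¹]) : IsIntegral K (φ q) := by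
  have hT : IsIntegral K (φ (T 1)) := isIntegral_map_T_one_of_not_injective φ hφ
  have hT_inv : IsIntegral K (φ (T (-1))) := by
    simpa using isIntegral_map_T_one_of_not_injective (φ.comp (invert (R := K)).toAlgHom)
      fun h ↦ hφ (by simpa using h)
  induction q using LaurentPolynomial.induction_on with
  | h_C a => rw [C_eq_algebraMap, AlgHom.commutes]; exact isIntegral_algebraMap
  | h_add hp hq => rw [map_add]; exact hp.add hq
  | h_C_mul_T n a h => rw [T_add, ← mul_assoc, map_mul]; exact h.mul hT
  | h_C_mul_T_Z n a h => rw [T_sub, ← mul_assoc, map_mul]; exact h.mul hT_inv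

theorem finite_laurentPolynomial_quotient {I : Ideal K[T;T⁻¹]} (hI : I ≠ ⊥) :
    Module.Finite K (K[T;T⁻¹] ⧸ I) := by
  have hmk : ¬ Function.Injective (Ideal.Quotient.mkₐ K I) := fun h ↦
    hI (by simpa using (RingHom.injective_iff_ker_eq_bot (Ideal.Quotient.mk I)).mp h)
  have : Algebra.IsIntegral K (K[T;T⁻¹] ⧸ I) := ⟨fun x ↦ by
    obtain ⟨q, rfl⟩ := Ideal.Quotient.mkₐ_surjective K I x
    exact isIntegral_map_of_not_injective _ hmk q⟩
  exact Algebra.IsIntegral.finite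

end LaurentPolynomial

theorem subalgebra_eq_top_of_isSimpleModule {K V : Type*} [Field K] [IsAlgClosed K]
    [AddCommGroup V] [Module K V] [FiniteDimensional K V] (A : Subalgebra K (Module.End K V))
    [IsSimpleModule A V] : A = ⊤ := by
  have schur : Function.Surjective (algebraMap K (Module.End A V)) :=
    (IsSimpleModule.algebraMap_end_bijective_of_isAlgClosed K).2
  have : Module.Finite (Module.End A V) V := .of_restrictScalars_finite K _ _
  refine eq_top_iff.mpr fun f _ ↦ ?_
  let F : Module.End (Module.End A V) V :=
    { f with
      map_smul' := fun c v ↦ by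
        obtain ⟨c, rfl⟩ := schur c
        simp }
  obtain ⟨a, ha⟩ := Module.Finite.toModuleEnd_moduleEnd_surjective (R := A) (M := V) F
  have : f = a := LinearMap.ext fun v ↦ congr($ha v).symm
  exact this ▸ a.2

theorem isSimpleModule_adjoin_range_toEnd (R L M : Type*) [CommRing R] [LieRing L]
    [LieAlgebra R L] [AddCommGroup M] [Module R M] [LieRingModule L M] [LieModule R L M]
    [LieModule.IsIrreducible R L M] :
    IsSimpleModule (Algebra.adjoin R (Set.range (LieModule.toEnd R L M))) M := by
  have := LieModule.nontrivial_of_isIrreducible R L M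
  refine (isSimpleModule_iff _ _).mpr { eq_bot_or_eq_top := fun P ↦ ?_ }
  let P' : LieSubmodule R L M :=
    { P.restrictScalars R with
      lie_mem := fun {x _} hm ↦
        P.smul_mem ⟨LieModule.toEnd R L M x, Algebra.subset_adjoin ⟨x, rfl⟩⟩ hm }
  have mem_P' (m : M) : m ∈ P' ↔ m ∈ P := Iff.rfl
  rcases eq_bot_or_eq_top P' with h | h
  · exact .inl (by ext m; simp [← mem_P', h])
  · exact .inr (by ext m; simp [← mem_P', h])

theorem adjoin_range_toEnd_eq_top (K L M : Type*) [Field K] [IsAlgClosed K] [LieRing L]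
    [LieAlgebra K L] [AddCommGroup M] [Module K M] [LieRingModule L M] [LieModule K L M]
    [FiniteDimensional K M] [LieModule.IsIrreducible K L M] :
    Algebra.adjoin K (Set.range (LieModule.toEnd K L M)) = ⊤ :=
  have := isSimpleModule_adjoin_range_toEnd K L M
  subalgebra_eq_top_of_isSimpleModule _

theorem lie_top_top_eq_top_of_isIrreducible (R L M : Type*) [CommRing R] [LieRing L]
    [LieAlgebra R L] [AddCommGroup M] [Module R M] [LieRingModule L M]
    [LieModule.IsIrreducible R L M] (hM : ¬ LieModule.IsTrivial L M) :
    ⁅(⊤ : LieIdeal R L), (⊤ : LieSubmodule R L M)⁆ = ⊤ :=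
  (eq_bot_or_eq_top _).resolve_left fun h ↦
    hM ((LieModule.trivial_iff_lower_central_eq_bot R L M).mpr (by simpa using h))

section TensorProduct

variable {R B M : Type*} [CommRing R] [AddCommGroup B] [Module R B] [AddCommGroup M] [Module R M]

theorem lTensor_smulRight (φ : Module.Dual R M) (m : M) (z : B ⊗[R] M) :
    (φ.smulRight m).lTensor B z = TensorProduct.rid R B (φ.lTensor B z) ⊗ₜ[R] m := by
  induction z with
  | zero => simp
  | tmul b v => simp [TensorProduct.smul_tmul]
  | add z w hz hw => simp only [map_add, hz, hw, TensorProduct.add_tmul]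

theorem exists_dual_lTensor_ne_zero [Module.Free R M] {z : B ⊗[R] M} (hz : z ≠ 0) :
    ∃ φ : Module.Dual R M, φ.lTensor B z ≠ 0 := by
  let b := Module.Free.chooseBasis R M
  let e := TensorProduct.equivFinsuppOfBasisRight (M := B) b
  have e_apply (i) (w : B ⊗[R] M) : e w i = TensorProduct.rid R B ((b.coord i).lTensor B w) := by
    induction w with
    | zero => simp
    | tmul b v => simp [e]
    | add w w' hw hw' => simp only [map_add, Finsupp.add_apply, hw, hw']
  obtain ⟨i, hi⟩ : ∃ i, e z i ≠ 0 := by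
    simpa using Finsupp.ne_iff.mp (e.map_ne_zero_iff.mpr hz)
  exact ⟨b.coord i, fun h ↦ hi (by rw [e_apply, h, map_zero])⟩

theorem exists_ne_zero_forall_tmul_mem [Module.Free R M] {N : Submodule R (B ⊗[R] M)}
    (hN : N ≠ ⊥) (hstable : ∀ f : Module.End R M, ∀ z ∈ N, f.lTensor B z ∈ N) :
    ∃ b : B, b ≠ 0 ∧ ∀ m : M, b ⊗ₜ[R] m ∈ N := by
  obtain ⟨z, hz, hz0⟩ := N.ne_bot_iff.mp hN
  obtain ⟨φ, hφ⟩ := exists_dual_lTensor_ne_zero hz0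
  refine ⟨TensorProduct.rid R B (φ.lTensor B z), by simpa using hφ, fun m ↦ ?_⟩
  rw [← lTensor_smulRight]
  exact hstable _ z hz

theorem finite_tensorProduct_quotient [Module.Finite R M] {P : Submodule R B}
    [Module.Finite R (B ⧸ P)] {N : Submodule R (B ⊗[R] M)}
    (hPN : ∀ b ∈ P, ∀ m : M, b ⊗ₜ[R] m ∈ N) : Module.Finite R ((B ⊗[R] M) ⧸ N) := by
  have hle : LinearMap.range (TensorProduct.map P.subtype LinearMap.id) ≤ N := by
    rintro _ ⟨z, rfl⟩
    induction z with
    | zero => simp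
    | tmul b m => exact hPN b b.2 m
    | add z w hz hw => rw [map_add]; exact N.add_mem hz hw
  exact .of_surjective (Submodule.factor hle ∘ₗ (TensorProduct.quotientTensorEquiv M P).toLinearMap)
    ((Submodule.factor_surjective hle).comp (TensorProduct.quotientTensorEquiv M P).surjective)

end TensorProduct

section ExtendScalars

variable {R B L M : Type*} [CommRing R] [CommRing B] [Algebra R B] [LieRing L] [LieAlgebra R L]
  [AddCommGroup M] [Module R M] [LieRingModule L M] [LieModule R L M]

theorem lTensor_mem_of_mem_adjoin_range_toEnd (N : LieSubmodule R (B ⊗[R] L) (B ⊗[R] M))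
    {f : Module.End R M} (hf : f ∈ Algebra.adjoin R (Set.range (LieModule.toEnd R L M)))
    {z : B ⊗[R] M} (hz : z ∈ N) : f.lTensor B z ∈ N := by
  induction hf using Algebra.adjoin_induction generalizing z with
  | mem f hf =>
    obtain ⟨x, rfl⟩ := hf
    have : (LieModule.toEnd R L M x).lTensor B z = ⁅(1 : B) ⊗ₜ[R] x, z⁆ :=
      congr($(LieModule.toEnd_baseChange R B L M x) z).symm
    exact this ▸ N.lie_mem hz
  | algebraMap c => simpa [Module.algebraMap_end_eq_smul_id] using N.smul_mem c hz
  | add f f' _ _ hf hf' => exact LinearMap.lTensor_add B f f' ▸ N.add_mem (hf hz) (hf' hz)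
  | mul f f' _ _ hf hf' => exact LinearMap.lTensor_mul B f f' ▸ hf (hf' hz)

/-- The ideal of those `b : B` with `b ⊗ M ⊆ N`, for a Lie submodule `N` of `B ⊗ M`. The
hypothesis `⁅L, M⁆ = M` is what makes this additive subgroup of `B` stable under multiplication. -/
def coefficientIdeal (hM : ⁅(⊤ : LieIdeal R L), (⊤ : LieSubmodule R L M)⁆ = ⊤)
    (N : LieSubmodule R (B ⊗[R] L) (B ⊗[R] M)) : Ideal B where
  carrier := {b | ∀ m : M, b ⊗ₜ[R] m ∈ N}
  zero_mem' m := by simp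
  add_mem' hb hb' m := by
    rw [TensorProduct.add_tmul]
    exact N.add_mem (hb m) (hb' m)
  smul_mem' c b hb m := by
    have hm : m ∈ Submodule.span R
        {⁅x, n⁆ | (x ∈ (⊤ : LieIdeal R L)) (n ∈ (⊤ : LieSubmodule R L M))} := by
      rw [← LieSubmodule.lieIdeal_oper_eq_linear_span', hM]
      trivial
    induction hm using Submodule.span_induction with
    | mem _ hxn =>
      obtain ⟨x, -, n, -, rfl⟩ := hxn
      rw [smul_eq_mul, ← LieAlgebra.ExtendScalars.bracket_tmul]
      exact N.lie_mem (hb n)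
    | zero => simp
    | add m m' _ _ hm hm' => rw [TensorProduct.tmul_add]; exact N.add_mem hm hm'
    | smul r m _ hm => rw [TensorProduct.tmul_smul]; exact N.smul_mem r hm

end ExtendScalars

theorem loopAlgebra_quotient_finiteDimensional_general {K B L M : Type*} [Field K] [IsAlgClosed K]
    [CommRing B] [Algebra K B] (hB : ∀ I : Ideal B, I ≠ ⊥ → Module.Finite K (B ⧸ I))
    [LieRing L] [LieAlgebra K L] [AddCommGroup M] [Module K M] [LieRingModule L M]
    [LieModule K L M] [FiniteDimensional K M] [LieModule.IsIrreducible K L M]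
    (hM : ¬ LieModule.IsTrivial L M) (N : LieSubmodule K (B ⊗[K] L) (B ⊗[K] M)) (hN : N ≠ ⊥) :
    FiniteDimensional K ((B ⊗[K] M) ⧸ N) := by
  let I : Ideal B := coefficientIdeal (lie_top_top_eq_top_of_isIrreducible K L M hM) N
  obtain ⟨b, hb0, hb⟩ : ∃ b : B, b ≠ 0 ∧ b ∈ I :=
    exists_ne_zero_forall_tmul_mem (N := N.toSubmodule) (by simpa using hN) fun f z hz ↦
      lTensor_mem_of_mem_adjoin_range_toEnd N
        (adjoin_range_toEnd_eq_top K L M ▸ Algebra.mem_top) hz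
  have : Module.Finite K (B ⧸ I) := hB I (I.ne_bot_iff.mpr ⟨b, hb, hb0⟩)
  have : Module.Finite K (B ⧸ I.restrictScalars K) :=
    .equiv (Submodule.Quotient.restrictScalarsEquiv K I).symm
  exact finite_tensorProduct_quotient (P := I.restrictScalars K) fun _ hc ↦ hc

/-- Every nonzero Lie ideal of the loop algebra `L(g) = ℂ[t,t⁻¹] ⊗ g` of a
finite-dimensional simple complex Lie algebra `g` has finite codimension:
the quotient Lie algebra is finite-dimensional over `ℂ`. -/
theorem loopAlgebra_quotient_finiteDimensional (g : Type*) [LieRing g] [LieAlgebra ℂ g]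
    [FiniteDimensional ℂ g] [LieAlgebra.IsSimple ℂ g]
    (J : LieIdeal ℂ (LaurentPolynomial ℂ ⊗[ℂ] g)) (hJ : J ≠ ⊥) :
    FiniteDimensional ℂ ((LaurentPolynomial ℂ ⊗[ℂ] g) ⧸ J) :=
  loopAlgebra_quotient_finiteDimensional_general (fun _ ↦ finite_laurentPolynomial_quotient)
    (LieAlgebra.IsSimple.non_abelian ℂ) J hJ
end

section
/- Let g be a finite-dimensional semisimple Lie algebra over ℂ with splitting Cartan subalgebra h, set of roots R ⊆ h* (the nonzero weights of the adjoint action of h on g), coroots h_β ∈ h for β ∈ R (so β(h_β) = 2), and root spaces g_β. Let W be the group of linear automorphisms of h* generated by the reflections s_β : χ ↦ χ − χ(h_β)·β for β ∈ R, and let Δ ⊆ R be a base of the root system, with Q⁺ the set of ℕ-linear combinations of elements of Δ. Let V be a nonzero finite-dimensional g-module which is the direct sum of its weight spaces V_χ = {v ∈ V : x·v = χ(x)·v for all x ∈ h}, and let wt(V) denote its set of weights. Suppose λ ∈ wt(V) satisfies: (i) λ − χ ∈ Q⁺ for every χ ∈ wt(V), and (ii) wt(V) is W-invariant. If w ∈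 W and α ∈ Δ are such that (wλ)(h_α) is a nonpositive integer, then wλ − α ∉ wt(V); in particular, x·V_{wλ} = 0 for every x in the root space g_{−α}. -/
open Module

section WeightSpaces

variable {g : Type} [LieRing g] [LieAlgebra ℂ g] (H : LieSubalgebra ℂ g)

/-- The `χ`-weight space of a module `V` over a Lie algebra `g`, with respect to a
subalgebra `H`: the subspace of vectors `v` with `x·v = χ(x)·v` for all `x ∈ H`.
Taking `V := g` (with the adjoint action) this is the root space `g_χ`. -/
def wtSpace (V : Type) [AddCommGroup V] [Module ℂ V] [LieRingModule g V]
    [LieModule ℂ g V] (χ : Dual ℂ H) : Submodule ℂ V where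
  carrier := {v | ∀ x : H, ⁅x, v⁆ = χ x • v}
  add_mem' := fun {a b} ha hb => by
    intro x; rw [lie_add, ha x, hb x, smul_add]
  zero_mem' := fun x => by rw [lie_zero, smul_zero]
  smul_mem' := fun c a ha => by
    intro x; rw [lie_smul, ha x, smul_comm]

end WeightSpaces

/-! If `wλ - α` were a weight, then so would be its reflection `wλ + (m + 1)α`, where
`(wλ)(h_α) = -m`. Applying `w⁻¹`, both `λ - γ` and `λ + (m + 1)γ` are weights for `γ = w⁻¹α`, so
`γ` and `-(m + 1)γ` lie in `Q⁺`. Then `-γ = -(m + 1)γ + mγ` lies in `Q⁺` too; as `Q⁺` is spanned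
over `ℕ` by linearly independent vectors, this forces `γ = 0`, contradicting `α ≠ 0`. -/

section PointedSubmonoid

lemma eq_zero_of_mem_of_neg_succ_nsmul_mem {G : Type*} [AddGroup G] {Q : AddSubmonoid G}
    (hQ : Q.IsPointed) {x : G} (hx : x ∈ Q) {m : ℕ} (hneg : -((m + 1) • x) ∈ Q) : x = 0 := by
  have neg_mem : -x ∈ Q := by
    have hsum : -((m + 1) • x) + m • x = -x := by
      rw [succ_nsmul, neg_add_rev, neg_add_cancel_right]
    exact hsum ▸ add_mem hneg (nsmul_mem hx m)
  exact hQ x hx neg_mem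

lemma isPointed_span_range_of_linearIndependent {R M ι : Type*} [Semiring R] [PartialOrder R]
    [CanonicallyOrderedAdd R] [AddCommGroup M] [Module R M] {v : ι → M}
    (hv : LinearIndependent R v) : (Submodule.span R (Set.range v)).toAddSubmonoid.IsPointed := by
  intro x hx hx'
  obtain ⟨c, rfl⟩ := Finsupp.mem_span_range_iff_exists_finsupp.1 hx
  obtain ⟨d, hd⟩ := Finsupp.mem_span_range_iff_exists_finsupp.1 hx'
  simp only [← Finsupp.linearCombination_apply] at hd ⊢
  have hcd : c + d = 0 := hv <| by rw [map_add, hd, add_neg_cancel, map_zero]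
  have hc : c = 0 := by
    ext i
    exact (add_eq_zero.1 (DFunLike.congr_fun hcd i)).1
  rw [hc, map_zero]

lemma mem_span_nat_range_iff {R M ι : Type*} [Semiring R] [AddCommMonoid M] [Module R M]
    {v : ι → M} {x : M} :
    x ∈ Submodule.span ℕ (Set.range v) ↔
      ∃ c : ι →₀ ℕ, x = c.sum fun i n => (n : R) • v i := by
  simp only [Finsupp.mem_span_range_iff_exists_finsupp, Nat.cast_smul_eq_nsmul, eq_comm]

end PointedSubmonoid

section Reflection

variable {K N : Type*} [CommRing K] [AddCommGroup N] [Module K N] {x : N} {f : Dual K N}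

lemma reflection_sub_self_right (h : f x = 2) (y : N) :
    reflection h (y - x) = y - (f y - 1) • x := by
  rw [reflection_apply, map_sub, h]
  module

theorem sub_notMem_of_apply_eq_neg_natCast (h : f x = 2) (hx : x ≠ 0)
    {Q : AddSubmonoid N} (hQ : Q.IsPointed) {S : Set N} {l : N} (hS : ∀ y ∈ S, l - y ∈ Q)
    {W : Subgroup (N ≃ₗ[K] N)} (hWS : ∀ σ ∈ W, ∀ y ∈ S, σ y ∈ S) (hW : reflection h ∈ W)
    {w : N ≃ₗ[K] N} (hw : w ∈ W) {m : ℕ} (hm : f (w l) = -m) :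
    w l - x ∉ S := by
  intro hmem
  have inv_mem_cone {y : N} (hy : w l - y ∈ S) : w⁻¹ y ∈ Q := by
    simpa [LinearEquiv.coe_inv] using hS _ (hWS _ (inv_mem hw) _ hy)
  have reflection_eq : reflection h (w l - x) = w l - -((m + 1) • x) := by
    rw [reflection_sub_self_right, hm, ← Nat.cast_smul_eq_nsmul K]
    push_cast
    module
  have reflection_mem : w l - -((m + 1) • x) ∈ S := reflection_eq ▸ hWS _ hW _ hmem
  have neg_mem : -((m + 1) • w⁻¹ x) ∈ Q := by
    simpa only [map_neg, map_nsmul] using inv_mem_cone reflection_mem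
  have inv_eq_zero : w⁻¹ x = 0 :=
    eq_zero_of_mem_of_neg_succ_nsmul_mem hQ (inv_mem_cone hmem) neg_mem
  exact hx ((w⁻¹).map_eq_zero_iff.1 inv_eq_zero)

end Reflection

section Weights

open LieModule

section General

variable {K L M : Type*} [CommRing K] [LieRing L] [LieAlgebra K L] {H : LieSubalgebra K L}
  [AddCommGroup M] [Module K M] [LieRingModule L M] [LieModule K L M]

lemma lie_mem_weightSpace_add {χ₁ χ₂ : H → K} {x : L} {v : M}
    (hx : x ∈ weightSpace L χ₁) (hv : v ∈ weightSpace M χ₂) :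
    ⁅x, v⁆ ∈ weightSpace M (χ₁ + χ₂) := by
  rw [mem_weightSpace] at hx hv ⊢
  intro t
  have hx' : ⁅(t : L), x⁆ = χ₁ t • x := hx t
  have hv' : ⁅(t : L), v⁆ = χ₂ t • v := hv t
  calc ⁅(t : L), ⁅x, v⁆⁆ = ⁅⁅(t : L), x⁆, v⁆ + ⁅x, ⁅(t : L), v⁆⁆ := leibniz_lie _ _ _
    _ = (χ₁ + χ₂) t • ⁅x, v⁆ := by
      rw [hx', hv', smul_lie, lie_smul, ← add_smul, Pi.add_apply]

theorem weight_space_stability_general {α : Dual K H} {αv : H}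
    (h : Dual.eval K H αv α = 2) (hα : α ≠ 0)
    {Q : AddSubmonoid (Dual K H)} (hQ : Q.IsPointed) {lam : Dual K H}
    (hhigh : ∀ χ : Dual K H, weightSpace M χ ≠ ⊥ → lam - χ ∈ Q)
    {W : Subgroup (Dual K H ≃ₗ[K] Dual K H)}
    (hWinv : ∀ σ ∈ W, ∀ χ : Dual K H, weightSpace M χ ≠ ⊥ → weightSpace M (σ χ) ≠ ⊥)
    (hW : reflection h ∈ W) {w : Dual K H ≃ₗ[K] Dual K H} (hw : w ∈ W)
    {m : ℕ} (hm : w lam αv = -m) :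
    weightSpace M (w lam - α) = ⊥ ∧
      ∀ x ∈ weightSpace L (-α), ∀ v ∈ weightSpace M (w lam), ⁅x, v⁆ = 0 := by
  have not_weight : weightSpace M (w lam - α) = ⊥ := not_not.1 <|
    sub_notMem_of_apply_eq_neg_natCast h hα hQ (S := {χ | weightSpace M χ ≠ ⊥}) hhigh hWinv hW hw hm
  refine ⟨not_weight, fun x hx v hv => ?_⟩
  have lie_mem : ⁅x, v⁆ ∈ weightSpace M (-α + w lam) := lie_mem_weightSpace_add hx hv
  rwa [neg_add_eq_sub, not_weight, LieSubmodule.mem_bot] at lie_mem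

end General

variable {g V : Type} [LieRing g] [LieAlgebra ℂ g] {H : LieSubalgebra ℂ g}
  [AddCommGroup V] [Module ℂ V] [LieRingModule g V] [LieModule ℂ g V]

lemma wtSpace_eq_weightSpace (χ : Dual ℂ H) :
    wtSpace H V χ = (weightSpace V χ).toSubmodule := by
  ext v
  exact (mem_weightSpace χ v).symm

end Weights

/-- Let `g` be a finite-dimensional semisimple complex Lie algebra with splitting
Cartan subalgebra `H`, root set `R`, coroots `h_β` (normalized by `β(h_β) = 2` and
`h_β ∈ [g_β, g_{−β}]`), Weyl group `W` generated by the reflections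
`s_β : χ ↦ χ − χ(h_β)·β`, and base `Δ` of `R` with positive cone `Q⁺`.  Let `V` be a
nonzero finite-dimensional weight module whose set of weights lies in `λ − Q⁺` and is
`W`-invariant.  If `w ∈ W` and `α ∈ Δ` are such that `(wλ)(h_α)` is a nonpositive
integer, then `wλ − α` is not a weight of `V`; in particular the root space `g_{−α}`
kills the weight space `V_{wλ}`. -/
theorem weight_space_stability
    (g : Type) [LieRing g] [LieAlgebra ℂ g] [FiniteDimensional ℂ g]
    [LieAlgebra.IsSemisimple ℂ g]
    (H : LieSubalgebra ℂ g) [H.IsCartanSubalgebra]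
    -- `H` is splitting: `g` is the sum of the simultaneous eigenspaces of `ad H`
    (hsplit : ⨆ χ : Dual ℂ H, wtSpace H g χ = ⊤)
    -- the roots: the nonzero weights of the adjoint action of `H` on `g`
    (R : Set (Dual ℂ H))
    (hR : R = {χ : Dual ℂ H | χ ≠ 0 ∧ wtSpace H g χ ≠ ⊥})
    -- the coroots
    (coroot : Dual ℂ H → H)
    (hcoroot : ∀ β ∈ R, β (coroot β) = 2 ∧
      ∃ x ∈ wtSpace H g β, ∃ y ∈ wtSpace H g (-β), (coroot β : g) = ⁅x, y⁆)
    -- the Weyl group: the group of linear automorphisms of `H*` generated by the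
    -- reflections `s_β : χ ↦ χ − χ(h_β)·β`, for `β ∈ R`
    (W : Subgroup ((Dual ℂ H) ≃ₗ[ℂ] (Dual ℂ H)))
    (hW : W = Subgroup.closure
      {σ : (Dual ℂ H) ≃ₗ[ℂ] (Dual ℂ H) | ∃ β ∈ R, ∀ χ, σ χ = χ - χ (coroot β) • β})
    -- a base `Δ` of the root system `R`
    (Δ : Set (Dual ℂ H)) (hΔR : Δ ⊆ R)
    (hΔind : LinearIndependent ℂ ((↑) : Δ → Dual ℂ H))
    (hΔbase : ∀ β ∈ R, ∃ c : Δ →₀ ℤ,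
      β = c.sum (fun i n => n • (i : Dual ℂ H)) ∧
        ((∀ i, 0 ≤ c i) ∨ (∀ i, c i ≤ 0)))
    -- `V` is a nonzero finite-dimensional weight module
    (V : Type) [AddCommGroup V] [Module ℂ V] [LieRingModule g V] [LieModule ℂ g V]
    [FiniteDimensional ℂ V] [Nontrivial V]
    (hwt : ⨆ χ : Dual ℂ H, wtSpace H V χ = ⊤)
    (lam : Dual ℂ H) (hlam : wtSpace H V lam ≠ ⊥)
    -- (i) every weight `χ` of `V` satisfies `λ − χ ∈ Q⁺`
    (hhigh : ∀ χ : Dual ℂ H, wtSpace H V χ ≠ ⊥ →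
      ∃ c : Δ →₀ ℕ, lam - χ = c.sum fun i n => (n : ℂ) • (i : Dual ℂ H))
    -- (ii) the set of weights of `V` is `W`-invariant
    (hWinv : ∀ σ ∈ W, ∀ χ : Dual ℂ H, wtSpace H V χ ≠ ⊥ → wtSpace H V (σ χ) ≠ ⊥)
    (w : (Dual ℂ H) ≃ₗ[ℂ] (Dual ℂ H)) (hw : w ∈ W)
    (α : Dual ℂ H) (hα : α ∈ Δ)
    -- `(wλ)(h_α)` is a nonpositive integer
    (hneg : ∃ n : ℤ, n ≤ 0 ∧ (w lam) (coroot α) = (n : ℂ)) :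
    wtSpace H V (w lam - α) = ⊥ ∧
      ∀ x ∈ wtSpace H g (-α), ∀ v ∈ wtSpace H V (w lam), ⁅x, v⁆ = 0 := by
  obtain ⟨n, hn, hm⟩ := hneg
  obtain ⟨m, rfl⟩ := Int.exists_eq_neg_ofNat hn
  obtain ⟨hα₀, -⟩ := hR.subset (hΔR hα)
  have hα₂ : Dual.eval ℂ H (coroot α) α = 2 := (hcoroot α (hΔR hα)).1
  have reflection_mem : reflection hα₂ ∈ W :=
    hW ▸ Subgroup.subset_closure ⟨α, hΔR hα, fun χ => reflection_apply χ hα₂⟩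
  simp only [wtSpace_eq_weightSpace, ne_eq, LieSubmodule.toSubmodule_eq_bot,
    LieSubmodule.mem_toSubmodule, ← mem_span_nat_range_iff] at hhigh hWinv ⊢
  exact weight_space_stability_general hα₂ hα₀
    (isPointed_span_range_of_linearIndependent (hΔind.restrict_scalars' ℕ)) hhigh hWinv
    reflection_mem hw (by simpa using hm)
end
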